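/- Let F be an algebraically closed field, f ∈ F⟨X_1,…,X_m⟩, and k ≥ 1 such that f is noncentral on M_k(F). Let n ≥ k, let Y_1,…,Y_m be generic n×n matrices over F, and let α_1,…,α_n be the roots (with multiplicity) of the characteristic polynomial of f(Y_1,…,Y_m) in an algebraic closure Ω of K = Frac(R). Then there is a subset S ⊆ {1,…,n} with |S| ≥ n − k such that the family (α_i)_{i ∈ S} is algebraically independent over F. -/

import Mathlib

section Helpers

open Polynomial

theorem key_indep {F B K ι : Type*} [Field F] [CommRing B] [IsDomain B] [Algebra F B]
    [Field K] [Algebra F K] (Φ : B →ₐ[F] K) (x : ι → B)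
    (hx : AlgebraicIndependent F (fun i => Φ (x i))) (y : B) (c : F)
    (hy : Φ y = algebraMap F K c) (hyc : y ≠ algebraMap F B c) :
    AlgebraicIndependent F (fun o : Option ι => o.elim y x) := by
  have hx' : AlgebraicIndependent F x :=
    AlgebraicIndependent.of_ringHom_of_comp_eq (RingHom.id F) Φ hx Function.injective_id
      (by ext; simp)
  rw [hx'.option_iff_transcendental]
  have hinj : ∀ a ∈ Algebra.adjoin F (Set.range x), Φ a = 0 → a = 0 := by
    intro a ha h0
    rw [Algebra.adjoin_range_eq_range_aeval] at ha
    obtain ⟨p, rfl⟩ := ha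
    have : MvPolynomial.aeval (fun i => Φ (x i)) p = 0 := by
      rw [← h0]
      exact (MvPolynomial.comp_aeval_apply x Φ p).symm
    have hp : p = 0 := (algebraicIndependent_iff.mp hx) p this
    simp [hp]
  set A := Algebra.adjoin F (Set.range x)
  rintro ⟨p, hp0, hp⟩
  obtain ⟨q, hq, hnd⟩ := p.exists_eq_pow_rootMultiplicity_mul_and_not_dvd hp0 (algebraMap F A c)
  rw [hq, map_mul, map_pow] at hp
  have h1 : aeval y (X - C (algebraMap F A c)) ≠ 0 := by
    simp only [map_sub, aeval_X, aeval_C]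
    rw [sub_ne_zero, ← IsScalarTower.algebraMap_apply]
    exact hyc
  have hq0 : aeval y q = 0 := by
    rcases mul_eq_zero.mp hp with h | h
    · exact absurd (eq_zero_of_pow_eq_zero h) h1
    · exact h
  apply hnd
  rw [dvd_iff_isRoot, IsRoot]
  apply Subtype.ext
  apply hinj _ (Subtype.property _)
  have e1 : Φ (aeval y q) = eval₂ (Φ.toRingHom.comp (algebraMap A B)) (algebraMap F K c) q := by
    rw [aeval_def, ← hy]
    exact hom_eval₂ q (algebraMap A B) Φ.toRingHom y
  have e2 : Φ ((eval (algebraMap F A c) q : A) : B) =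
      eval₂ (Φ.toRingHom.comp (algebraMap A B)) (algebraMap F K c) q := by
    have := eval₂_at_apply (p := q) (Φ.toRingHom.comp (algebraMap A B)) (algebraMap F A c)
    have h3 : (Φ.toRingHom.comp (algebraMap A B)) (algebraMap F A c) = algebraMap F K c := by
      simp only [RingHom.comp_apply, ← IsScalarTower.algebraMap_apply]
      exact Φ.commutes c
    rw [h3] at this
    rw [this]
    rfl
  rw [e2, ← e1, hq0, map_zero]

theorem exists_ext {R B K : Type*} [CommRing R] [CommRing B] [Algebra R B] [IsDomain B]
    [Algebra.IsIntegral R B] [Field K] [IsAlgClosed K]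
    (hinj : Function.Injective (algebraMap R B)) (φ : R →+* K) :
    ∃ Φ : B →+* K, ∀ r, Φ (algebraMap R B r) = φ r := by
  have : (RingHom.ker φ).IsPrime := RingHom.ker_isPrime φ
  obtain ⟨Q, hQ, hQP⟩ := Ideal.exists_ideal_over_prime_of_isIntegral_of_isDomain (S := B)
    (RingHom.ker φ) (by rw [(RingHom.injective_iff_ker_eq_bot _).mp hinj]; exact bot_le)
  let R' := R ⧸ RingHom.ker φ
  let B' := B ⧸ Q
  let : Algebra R' B' := (Ideal.quotientMap Q (algebraMap R B) (le_of_eq hQP.symm)).toAlgebra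
  let : Algebra R' K := (RingHom.kerLift φ).toAlgebra
  have i1 : Function.Injective (algebraMap R' B') :=
    Ideal.quotientMap_injective' (le_of_eq hQP)
  have i2 : Function.Injective (algebraMap R' K) := RingHom.kerLift_injective φ
  have : Module.IsTorsionFree R' B' := Module.isTorsionFree_iff_algebraMap_injective.mpr i1
  have : Module.IsTorsionFree R' K := Module.isTorsionFree_iff_algebraMap_injective.mpr i2
  have : Algebra.IsIntegral R' B' := by
    constructor
    intro b
    obtain ⟨b, rfl⟩ := Ideal.Quotient.mk_surjective b
    have hb := Algebra.IsIntegral.isIntegral (R := R) b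
    obtain ⟨p, hp, hpb⟩ := hb
    refine ⟨p.map (Ideal.Quotient.mk _), hp.map _, ?_⟩
    rw [Polynomial.eval₂_map]
    have : (algebraMap R' B').comp (Ideal.Quotient.mk (RingHom.ker φ))
        = (Ideal.Quotient.mk Q).comp (algebraMap R B) := by
      ext r; rfl
    rw [this, ← Polynomial.hom_eval₂, hpb, map_zero]
  let L : B' →ₐ[R'] K := IsAlgClosed.lift
  refine ⟨L.toRingHom.comp (Ideal.Quotient.mk Q), fun r => ?_⟩
  have := L.commutes (Ideal.Quotient.mk _ r)
  exact this

theorem exists_perm_of_prod {n : ℕ} {K : Type*} [Field K] (u v : Fin n → K)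
    (h : ∏ i, (X - C (u i)) = ∏ i, (X - C (v i))) :
    ∃ e : Fin n ≃ Fin n, ∀ i, v (e i) = u i := by
  classical
  have hm : (Finset.univ : Finset (Fin n)).val.map u = (Finset.univ : Finset (Fin n)).val.map v := by
    have h2 := congrArg Polynomial.roots h
    have hh : ∀ w : Fin n → K, (∏ i, (X - C (w i))).roots
        = (Finset.univ : Finset (Fin n)).val.map w := by
      intro w
      have := Polynomial.roots_multiset_prod_X_sub_C ((Finset.univ : Finset (Fin n)).val.map w)
      rw [Multiset.map_map] at this
      exact this
    rwa [hh, hh] at h2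
  have hc : ∀ c, Nonempty ({i // u i = c} ≃ {i // v i = c}) := by
    intro c
    apply Fintype.card_eq.mp
    have := congrArg (Multiset.count c) hm
    rw [Multiset.count_map, Multiset.count_map] at this
    rw [Fintype.card_subtype, Fintype.card_subtype]
    simpa [Finset.card_def, Finset.filter_val, eq_comm] using this
  have E := fun c => Classical.choice (hc c)
  exact ⟨Equiv.ofFiberEquiv E, fun i => Equiv.ofFiberEquiv_map E i⟩

theorem step_abs {F R Ω K : Type*} [Field F] [CommRing R] [IsDomain R] [Algebra F R]
    [Field Ω] [Algebra R Ω] [Algebra F Ω] [IsScalarTower F R Ω] [Field K] [IsAlgClosed K]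
    [Algebra F K] (hinj : Function.Injective (algebraMap R Ω)) (φ : R →ₐ[F] K) {n : ℕ}
    (P : R[X]) (hP : P.Monic) (α : Fin (n + 1) → Ω)
    (hα : P.map (algebraMap R Ω) = ∏ i, (X - C (α i)))
    (α' : Fin n → K) (c : F)
    (hφ : P.map φ.toRingHom = (∏ i, (X - C (α' i))) * (X - C (algebraMap F K c)))
    (hc : P.eval (algebraMap F R c) ≠ 0) (S' : Finset (Fin n))
    (hS : AlgebraicIndependent F (fun i : S' => α' i)) :
    ∃ S : Finset (Fin (n + 1)), S'.card + 1 ≤ S.card ∧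
      AlgebraicIndependent F (fun i : S => α i) := by
  classical
  let B := integralClosure R Ω
  have hint : ∀ i, IsIntegral R (α i) := by
    intro i
    refine ⟨P, hP, ?_⟩
    rw [← eval_map, hα, eval_prod]
    exact Finset.prod_eq_zero (Finset.mem_univ i) (by simp)
  let β : Fin (n + 1) → B := fun i => ⟨α i, hint i⟩
  have hBinj : Function.Injective (algebraMap B Ω) := Subtype.val_injective
  have hβ : P.map (algebraMap R B) = ∏ i, (X - C (β i)) := by
    apply Polynomial.map_injective _ hBinj
    rw [Polynomial.map_map, ← IsScalarTower.algebraMap_eq, hα, Polynomial.map_prod]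
    simp [β]
  have hRB : Function.Injective (algebraMap R B) := by
    have : Function.Injective ((algebraMap B Ω).comp (algebraMap R B)) := by
      rw [← IsScalarTower.algebraMap_eq]; exact hinj
    rw [RingHom.coe_comp] at this
    exact Function.Injective.of_comp this
  obtain ⟨Φ0, hΦ0⟩ := exists_ext hRB φ.toRingHom
  let : Algebra F B := ((algebraMap R B).comp (algebraMap F R)).toAlgebra
  let Φ : B →ₐ[F] K := { Φ0 with
    commutes' := fun r => by
      have := hΦ0 (algebraMap F R r)
      refine this.trans ?_
      exact φ.commutes r }
  have hprod : ∏ i, (X - C (Fin.snoc (α := fun _ => K) α' (algebraMap F K c) i))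
      = ∏ i, (X - C (Φ (β i))) := by
    rw [Fin.prod_univ_castSucc]
    simp only [Fin.snoc_castSucc, Fin.snoc_last]
    rw [← hφ]
    have : φ.toRingHom = Φ0.comp (algebraMap R B) := by
      ext r; exact (hΦ0 r).symm
    rw [this, ← Polynomial.map_map, hβ, Polynomial.map_prod]
    simp
    rfl
  obtain ⟨e, he⟩ := exists_perm_of_prod _ _ hprod
  let g : Option S' → Fin (n + 1) := fun o => o.elim (e (Fin.last n)) (fun i => e i.1.castSucc)
  have hne : ∀ i, α i ≠ algebraMap F Ω c := by
    intro i hi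
    apply hc
    apply hinj
    rw [map_zero, ← eval₂_at_apply, ← eval_map, hα, eval_prod]
    apply Finset.prod_eq_zero (Finset.mem_univ i)
    rw [hi, ← IsScalarTower.algebraMap_apply]
    simp
  have hk := key_indep Φ (fun i : S' => β (e i.1.castSucc))
    (by simpa [he] using hS) (β (e (Fin.last n))) c (by rw [he]; simp) (by
      intro h
      apply hne (e (Fin.last n))
      have := congrArg (algebraMap B Ω) h
      rw [IsScalarTower.algebraMap_apply F R Ω]
      exact this)
  let ψ : B →ₐ[F] Ω := { algebraMap B Ω with
    commutes' := fun r => by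
      rw [IsScalarTower.algebraMap_apply F R Ω]; rfl }
  have hk2 : AlgebraicIndependent F (fun o => α (g o)) := by
    have := hk.map' (f := ψ) hBinj
    convert this using 1
    ext o
    cases o <;> rfl
  have hginj : Function.Injective g := by
    intro o1 o2 h
    exact hk2.injective (by simp only [h])
  refine ⟨Finset.univ.image g, ?_, ?_⟩
  · rw [Finset.card_image_of_injective _ hginj]
    simp
  · have hex : ∀ s : (Finset.univ.image g : Finset (Fin (n+1))), ∃ o, g o = s.1 := by
      intro s
      obtain ⟨o, -, ho⟩ := Finset.mem_image.mp s.2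
      exact ⟨o, ho⟩
    choose kk hkk using hex
    have hkinj : Function.Injective kk := by
      intro a b h
      apply Subtype.ext
      rw [← hkk, ← hkk, h]
    have := hk2.comp kk hkinj
    convert this using 1
    ext s
    simp [hkk]


/-- generic matrices -/
noncomputable def genMat (F : Type) [Field F] (m n : ℕ) (ℓ : Fin m) :
    Matrix (Fin n) (Fin n) (MvPolynomial (Fin m × Fin n × Fin n) F) :=
  Matrix.of fun i j : Fin n => MvPolynomial.X (ℓ, i, j)

theorem lift_algHom {F : Type} [Field F] {m : ℕ} {A B : Type*} [Ring A] [Algebra F A] [Ring B]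
    [Algebra F B] (φ : A →ₐ[F] B) (a : Fin m → A) (f : FreeAlgebra F (Fin m)) :
    φ (FreeAlgebra.lift F a f) = FreeAlgebra.lift F (fun i => φ (a i)) f := by
  have : φ.comp (FreeAlgebra.lift F a) = FreeAlgebra.lift F (fun i => φ (a i)) := by
    ext i; simp
  exact DFunLike.congr_fun this f

theorem lift_zero {F : Type} [Field F] {m : ℕ} {A : Type*} [Ring A] [Algebra F A]
    (f : FreeAlgebra F (Fin m)) :
    FreeAlgebra.lift F (fun _ => (0 : A)) f = algebraMap F A (FreeAlgebra.algebraMapInv f) := by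
  have := lift_algHom (Algebra.ofId F A) (fun _ : Fin m => (0 : F)) f
  simp only [map_zero] at this
  rw [← this]
  rfl

theorem lift_blocks {F : Type} [Field F] {m : ℕ} {A : Type*} [CommRing A] [Algebra F A]
    {p q : Type*} [Fintype p] [Fintype q] [DecidableEq p] [DecidableEq q]
    (a : Fin m → Matrix p p A) (b : Fin m → Matrix q q A) (f : FreeAlgebra F (Fin m)) :
    FreeAlgebra.lift F (fun i => Matrix.fromBlocks (a i) 0 0 (b i)) f
      = Matrix.fromBlocks (FreeAlgebra.lift F a f) 0 0 (FreeAlgebra.lift F b f) := by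
  induction f using FreeAlgebra.induction with
  | grade0 r =>
    rw [AlgHom.commutes, AlgHom.commutes, AlgHom.commutes]
    simp only [Algebra.algebraMap_eq_smul_one]
    rw [← Matrix.fromBlocks_one, Matrix.fromBlocks_smul]
    simp
  | grade1 x => simp
  | mul x y hx hy => rw [map_mul, hx, hy, Matrix.fromBlocks_multiply]; simp
  | add x y hx hy => rw [map_add, hx, hy, Matrix.fromBlocks_add]; simp

/-- specialization of generic matrices along any tuple of matrices -/
theorem lift_genMat {F : Type} [Field F] {m n : ℕ} {A : Type*} [CommRing A] [Algebra F A]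
    (a : Fin m → Matrix (Fin n) (Fin n) A) (f : FreeAlgebra F (Fin m)) :
    (FreeAlgebra.lift F (genMat F m n) f).map
      (MvPolynomial.aeval (R := F) fun t : Fin m × Fin n × Fin n => a t.1 t.2.1 t.2.2)
      = FreeAlgebra.lift F a f := by
  have := lift_algHom (AlgHom.mapMatrix (m := Fin n)
    (MvPolynomial.aeval (R := F) fun t : Fin m × Fin n × Fin n => a t.1 t.2.1 t.2.2))
    (genMat F m n) f
  rw [AlgHom.mapMatrix_apply] at this
  rw [this]
  congr 2
  ext ℓ i j
  simp [genMat]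

/-- The homogeneous shift-invariant matrices. -/
def Good {L : Type} [CommRing L] (σ : L →+* L) {n : ℕ}
    (M : Matrix (Fin (n + 1)) (Fin (n + 1)) L[X]) : Prop :=
  (∀ a b d, (M a b).coeff d ≠ 0 → a.val + d ≡ b.val [MOD (n + 1)]) ∧
    ∀ a b, M (a + 1) (b + 1) = (M a b).map σ

theorem Good.add {L : Type} [CommRing L] {σ : L →+* L} {n : ℕ}
    {M N : Matrix (Fin (n + 1)) (Fin (n + 1)) L[X]} (hM : Good σ M) (hN : Good σ N) :
    Good σ (M + N) := by
  refine ⟨fun a b d h => ?_, fun a b => ?_⟩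
  · by_cases h1 : (M a b).coeff d = 0
    · by_cases h2 : (N a b).coeff d = 0
      · simp [h1, h2] at h
      · exact hN.1 _ _ _ h2
    · exact hM.1 _ _ _ h1
  · simp [hM.2, hN.2]

theorem Good.mul {L : Type} [CommRing L] {σ : L →+* L} {n : ℕ}
    {M N : Matrix (Fin (n + 1)) (Fin (n + 1)) L[X]} (hM : Good σ M) (hN : Good σ N) :
    Good σ (M * N) := by
  refine ⟨fun a b d h => ?_, fun a b => ?_⟩
  · rw [Matrix.mul_apply, finsetSum_coeff] at h
    obtain ⟨c, -, hc⟩ := Finset.exists_ne_zero_of_sum_ne_zero h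
    rw [coeff_mul] at hc
    obtain ⟨⟨i, j⟩, hij, hc⟩ := Finset.exists_ne_zero_of_sum_ne_zero hc
    have h1 := hM.1 a c i (left_ne_zero_of_mul hc)
    have h2 := hN.1 c b j (right_ne_zero_of_mul hc)
    rw [Finset.HasAntidiagonal.mem_antidiagonal] at hij
    simp only at hij
    rw [← hij, ← add_assoc]
    exact (h1.add_right j).trans h2
  · rw [Matrix.mul_apply, Matrix.mul_apply, Polynomial.map_sum,
      ← Equiv.sum_comp (Equiv.addRight (1 : Fin (n + 1)))]
    simp [hM.2, hN.2]

theorem Good.algebraMap {F L : Type} [Field F] [CommRing L] [Algebra F L] {σ : L →ₐ[F] L} {n : ℕ}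
    (r : F) :
    Good (σ : L →+* L) (algebraMap F (Matrix (Fin (n + 1)) (Fin (n + 1)) L[X]) r) := by
  refine ⟨fun a b d h => ?_, fun a b => ?_⟩
  · rw [Matrix.algebraMap_matrix_apply] at h
    split_ifs at h with hab
    · subst hab
      rw [Polynomial.algebraMap_apply, coeff_C] at h
      split_ifs at h with hd
      · subst hd; exact Nat.ModEq.refl _
      · simp at h
    · simp at h
  · rw [Matrix.algebraMap_matrix_apply, Matrix.algebraMap_matrix_apply]
    by_cases hab : a = b
    · simp [hab, Polynomial.algebraMap_apply]
    · simp [hab]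

theorem Good.det_ne_zero {L : Type} [CommRing L] [IsDomain L] {σ : L →+* L}
    (hσ : Function.Injective σ) {n : ℕ}
    {M : Matrix (Fin (n + 1)) (Fin (n + 1)) L[X]} (hM : Good σ M) (h0 : M ≠ 0) : M.det ≠ 0 := by
  classical
  intro hdet
  obtain ⟨v, hv0, hv⟩ := Matrix.exists_mulVec_eq_zero_iff.mpr hdet
  -- maximal degree of a nonzero entry
  have htop : ∀ {ι : Type} [Fintype ι] (w : ι → L[X]), w ≠ 0 →
      ∃ d i, (w i).coeff d ≠ 0 ∧ ∀ j, (w j).natDegree ≤ d := by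
    intro ι _ w hw
    obtain ⟨i0, hi0⟩ := Function.ne_iff.mp hw
    obtain ⟨i, hi, hmax⟩ := Finset.exists_max_image (Finset.univ.filter fun i => w i ≠ 0)
      (fun i => (w i).natDegree) ⟨i0, by simpa using hi0⟩
    refine ⟨(w i).natDegree, i, ?_, fun j => ?_⟩
    · simpa using hi
    · by_cases hj : w j = 0
      · simp [hj]
      · exact hmax j (by simpa using hj)
  obtain ⟨d, ⟨a0, b0⟩, hab, hd⟩ := htop (fun t : Fin (n + 1) × Fin (n + 1) => M t.1 t.2) (by
    intro h
    apply h0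
    ext1 a b
    exact congrFun h (a, b))
  obtain ⟨e, b, hb, he⟩ := htop v hv0
  simp only at hab hd
  have hshift : ∀ i : ℕ, ∃ a' b', (M a' b').coeff d ≠ 0 ∧ a' = a0 + Fin.ofNat (n + 1) i := by
    intro i
    induction i with
    | zero => exact ⟨a0, b0, hab, by simp⟩
    | succ i ih =>
      obtain ⟨a', b', h1, h2⟩ := ih
      refine ⟨a' + 1, b' + 1, ?_, ?_⟩
      · rw [hM.2, coeff_map]
        exact fun h => h1 (hσ (by rw [h, map_zero]))
      · rw [h2]
        ext
        simp [Fin.val_add, Fin.ofNat, add_assoc]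
  have hall : ∀ a, ∃ b', (M a b').coeff d ≠ 0 := by
    intro a
    obtain ⟨a', b', h1, h2⟩ := hshift (a - a0).val
    refine ⟨b', ?_⟩
    have : a' = a := by rw [h2]; simp
    rwa [← this]
  -- pick the row a with a + d = b
  let a : Fin (n + 1) := b - Fin.ofNat (n + 1) d
  have ha : a.val + d ≡ b.val [MOD (n + 1)] := by
    have h1 : a + Fin.ofNat (n + 1) d = b := by simp [a]
    have h2 := congrArg Fin.val h1
    rw [Fin.val_add] at h2
    simp only [Fin.ofNat] at h2
    rw [Nat.ModEq, ← h2]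
    simp
  obtain ⟨b', hb'⟩ := hall a
  have huniq : ∀ b', (M a b').coeff d ≠ 0 → b' = b := by
    intro b' h
    have := (hM.1 _ _ _ h).symm.trans ha
    exact Fin.ext (Nat.ModEq.eq_of_lt_of_lt this b'.2 b.2)
  have hbb := huniq b' hb'
  subst hbb
  have hz := congrArg (fun p => Polynomial.coeff p (d + e)) (congrFun hv a)
  simp only [Matrix.mulVec, dotProduct, finsetSum_coeff, Pi.zero_apply, coeff_zero] at hz
  rw [Finset.sum_eq_single b'] at hz
  · rw [coeff_mul_add_eq_of_natDegree_le (hd (a, b')) (he b')] at hz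
    exact mul_ne_zero hb' hb hz
  · intro j _ hj
    rw [coeff_mul_add_eq_of_natDegree_le (hd (a, j)) (he j)]
    by_contra h
    exact hj (huniq j (left_ne_zero_of_mul h))
  · simp

theorem det_genMat_ne_zero {F : Type} [Field F] {m n : ℕ} (f : FreeAlgebra F (Fin m))
    (hf : FreeAlgebra.lift F (genMat F m (n + 1)) f ≠ 0) :
    (FreeAlgebra.lift F (genMat F m (n + 1)) f).det ≠ 0 := by
  let L := MvPolynomial (Fin m × Fin (n + 1) × Fin (n + 1)) F
  let sh : Fin m × Fin (n + 1) × Fin (n + 1) → Fin m × Fin (n + 1) × Fin (n + 1) :=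
    fun t => (t.1, t.2.1 + 1, t.2.2 + 1)
  have hsh : Function.Injective sh := by
    rintro ⟨a, b, c⟩ ⟨a', b', c'⟩ h
    simpa [sh] using h
  let σ : L →ₐ[F] L := MvPolynomial.rename sh
  have hσ : Function.Injective σ := MvPolynomial.rename_injective sh hsh
  let s : Fin m → Matrix (Fin (n + 1)) (Fin (n + 1)) L[X] := fun ℓ =>
    Matrix.of fun a b => C (MvPolynomial.X (ℓ, a, b)) * X ^ (b - a).val
  have hs : ∀ ℓ, Good (σ : L →+* L) (s ℓ) := by
    intro ℓ
    refine ⟨fun a b d h => ?_, fun a b => ?_⟩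
    · simp only [s, Matrix.of_apply, coeff_C_mul_X_pow] at h
      split_ifs at h with hd
      · subst hd
        have h1 : a + (b - a) = b := by simp
        have h2 := congrArg Fin.val h1
        rw [Fin.val_add] at h2
        rw [Nat.ModEq, h2, Nat.mod_eq_of_lt b.2]
      · exact absurd rfl h
    · simp [s, σ, sh]
      exact (MvPolynomial.rename_X (R := F) sh (ℓ, a, b)).symm
  have hG : ∀ g : FreeAlgebra F (Fin m), Good (σ : L →+* L) (FreeAlgebra.lift F s g) := by
    intro g
    induction g using FreeAlgebra.induction with
    | grade0 r => rw [AlgHom.commutes]; exact Good.algebraMap r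
    | grade1 x => rw [FreeAlgebra.lift_ι_apply]; exact hs x
    | mul x y hx hy => rw [map_mul]; exact hx.mul hy
    | add x y hx hy => rw [map_add]; exact hx.add hy
  have hne : FreeAlgebra.lift F s f ≠ 0 := by
    intro h
    apply hf
    have h1 := lift_algHom (AlgHom.mapMatrix (m := Fin (n + 1))
      ((Polynomial.aeval (1 : L)).restrictScalars F)) s f
    rw [h, map_zero] at h1
    rw [h1]
    congr 2
    ext1 ℓ
    ext1 i j
    simp [genMat, s]
  have hd := (hG f).det_ne_zero hσ hne
  intro h0
  apply hd
  rw [← lift_genMat s f]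
  have := AlgHom.map_det (MvPolynomial.aeval (R := F) fun t : Fin m × Fin (n + 1) × Fin (n + 1) =>
    s t.1 t.2.1 t.2.2) (FreeAlgebra.lift F (genMat F m (n + 1)) f)
  rw [h0, map_zero] at this
  exact this.symm

theorem noncentral_gen {F : Type} [Field F] {m k n : ℕ} (hkn : k ≤ n) (f : FreeAlgebra F (Fin m))
    (a : Fin m → Matrix (Fin k) (Fin k) F) (c : F)
    (ha : FreeAlgebra.lift F a f ≠ algebraMap F _ c) :
    FreeAlgebra.lift F (genMat F m n) f ≠ algebraMap F _ c := by
  obtain ⟨r, rfl⟩ := Nat.exists_eq_add_of_le hkn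
  intro h
  apply ha
  let E := Matrix.reindexAlgEquiv F F (finSumFinEquiv (m := k) (n := r))
  have h1 := lift_genMat (fun i => E (Matrix.fromBlocks (a i) 0 0 0)) f
  have h2 := lift_algHom E.toAlgHom (fun i => Matrix.fromBlocks (a i) 0 0 0) f
  have h3 := lift_blocks a (fun _ => (0 : Matrix (Fin r) (Fin r) F)) f
  have h4 : FreeAlgebra.lift F (fun i => E (Matrix.fromBlocks (a i) 0 0 0)) f
      = algebraMap F _ c := by
    rw [← h1, h]
    ext i j
    simp [Matrix.algebraMap_matrix_apply]
    split_ifs <;> simp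
  have h5 : FreeAlgebra.lift F (fun i => Matrix.fromBlocks (a i) 0 0 (0 : Matrix (Fin r) (Fin r) F)) f
      = algebraMap F _ c := by
    apply E.injective
    rw [AlgEquiv.commutes]
    exact h2.trans h4
  rw [h3] at h5
  ext i j
  have := congrFun (congrFun h5 (Sum.inl i)) (Sum.inl j)
  simpa [Matrix.algebraMap_matrix_apply] using this

theorem charpoly_spec {F : Type} [Field F] {m n : ℕ} (f : FreeAlgebra F (Fin m)) :
    ∃ φ : MvPolynomial (Fin m × Fin (n + 1) × Fin (n + 1)) F →ₐ[F]
        MvPolynomial (Fin m × Fin n × Fin n) F,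
      (FreeAlgebra.lift F (genMat F m (n + 1)) f).charpoly.map φ.toRingHom
        = (FreeAlgebra.lift F (genMat F m n) f).charpoly *
          (X - C (algebraMap F _ (FreeAlgebra.algebraMapInv f))) := by
  let R := MvPolynomial (Fin m × Fin n × Fin n) F
  let E := Matrix.reindexAlgEquiv F R (finSumFinEquiv (m := n) (n := 1))
  let a : Fin m → Matrix (Fin (n + 1)) (Fin (n + 1)) R :=
    fun i => E (Matrix.fromBlocks (genMat F m n i) 0 0 0)
  refine ⟨MvPolynomial.aeval (R := F) fun t => a t.1 t.2.1 t.2.2, ?_⟩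
  have h1 := lift_genMat a f
  have h2 := lift_algHom E.toAlgHom (fun i => Matrix.fromBlocks (genMat F m n i) 0 0 0) f
  have h3 := lift_blocks (genMat F m n) (fun _ => (0 : Matrix (Fin 1) (Fin 1) R)) f
  rw [← Matrix.charpoly_map]
  have h4 : (FreeAlgebra.lift F (genMat F m (n + 1)) f).map
      (MvPolynomial.aeval (R := F) fun t => a t.1 t.2.1 t.2.2).toRingHom
      = Matrix.reindex finSumFinEquiv finSumFinEquiv
        (Matrix.fromBlocks (FreeAlgebra.lift F (genMat F m n) f) 0 0
          (algebraMap F (Matrix (Fin 1) (Fin 1) R) (FreeAlgebra.algebraMapInv f))) := by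
    refine h1.trans (h2.symm.trans ?_)
    rw [h3, lift_zero]
    rfl
  rw [h4, Matrix.charpoly_reindex, Matrix.charpoly_fromBlocks_zero₁₂]
  congr 1
  rw [Matrix.charpoly, Matrix.det_fin_one]
  simp [Matrix.algebraMap_matrix_apply]
  rfl

theorem exists_roots {K : Type*} [Field K] [IsAlgClosed K] (Q : K[X]) (hm : Q.Monic) {N : ℕ}
    (hdeg : Q.natDegree = N) : ∃ α : Fin N → K, Q = ∏ i, (X - C (α i)) := by
  have hs : Q.Splits := IsAlgClosed.splits Q
  have hcard : Q.roots.card = N := by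
    rw [← hdeg]; exact hs.natDegree_eq_card_roots.symm
  have hprod := hs.eq_prod_roots_of_monic hm
  have hlen : Q.roots.toList.length = N := by simpa using hcard
  refine ⟨fun i => Q.roots.toList.get (i.cast hlen.symm), ?_⟩
  conv_lhs => rw [hprod, ← Multiset.coe_toList Q.roots]
  rw [Multiset.map_coe, Multiset.prod_coe, ← List.prod_ofFn]
  congr 1
  apply List.ext_get
  · simp [hcard]
  · intro i h1 h2
    simp

/-- The claim that at least `d` of the eigenvalues in size `N` are independent. -/
def Claim {F : Type} [Field F] {m : ℕ} (f : FreeAlgebra F (Fin m)) (N d : ℕ) : Prop :=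
  ∀ α : Fin N → AlgebraicClosure
      (FractionRing (MvPolynomial (Fin m × Fin N × Fin N) F)),
    (FreeAlgebra.lift F (genMat F m N) f).charpoly.map
      (algebraMap (MvPolynomial (Fin m × Fin N × Fin N) F) _)
      = ∏ i, (X - C (α i)) →
    ∃ S : Finset (Fin N), d ≤ S.card ∧ AlgebraicIndependent F (fun i : S => α i)

theorem claim_step {F : Type} [Field F] {m k : ℕ} (f : FreeAlgebra F (Fin m))
    (a : Fin m → Matrix (Fin k) (Fin k) F)
    (ha : ∀ c : F, FreeAlgebra.lift F a f ≠ c • (1 : Matrix (Fin k) (Fin k) F)) (N d : ℕ)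
    (hN : k ≤ N) (ih : Claim f N d) : Claim f (N + 1) (d + 1) := by
  intro α hα
  let R' := MvPolynomial (Fin m × Fin N × Fin N) F
  let K := AlgebraicClosure (FractionRing R')
  let R := MvPolynomial (Fin m × Fin (N + 1) × Fin (N + 1)) F
  let Ω := AlgebraicClosure (FractionRing R)
  obtain ⟨α', hα'⟩ := exists_roots
    ((FreeAlgebra.lift F (genMat F m N) f).charpoly.map (algebraMap R' K))
    ((Matrix.charpoly_monic _).map _) (N := N) (by
      rw [(Matrix.charpoly_monic _).natDegree_map, Matrix.charpoly_natDegree_eq_dim]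
      simp)
  obtain ⟨S', hS', hind⟩ := ih α' hα'
  obtain ⟨φ, hφ⟩ := charpoly_spec (n := N) f
  set c := FreeAlgebra.algebraMapInv f with hc
  have hinj : Function.Injective (algebraMap R Ω) := by
    rw [IsScalarTower.algebraMap_eq R (FractionRing R) Ω]
    exact (algebraMap (FractionRing R) Ω).injective.comp (IsFractionRing.injective R _)
  have hne : FreeAlgebra.lift F (genMat F m (N + 1)) f ≠ algebraMap F _ c :=
    noncentral_gen (by omega) f a c (by
      rw [Algebra.algebraMap_eq_smul_one]; exact ha c)
  have hdet := det_genMat_ne_zero (n := N) (algebraMap F _ c - f) (by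
    rw [map_sub, AlgHom.commutes]
    exact sub_ne_zero.mpr hne.symm)
  obtain ⟨S, h1, h2⟩ := step_abs (F := F) (R := R) (Ω := Ω) (K := K) hinj
    ((IsScalarTower.toAlgHom F R' K).comp φ) _ (Matrix.charpoly_monic _) α hα α' c
    (by
      have e : ((IsScalarTower.toAlgHom F R' K).comp φ).toRingHom
        = (algebraMap R' K).comp φ.toRingHom := rfl
      rw [e, ← Polynomial.map_map, hφ, Polynomial.map_mul, hα']
      congr 1
      rw [Polynomial.map_sub, Polynomial.map_X, Polynomial.map_C,
        ← IsScalarTower.algebraMap_apply])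
    (by
      rw [Matrix.eval_charpoly]
      rw [map_sub, AlgHom.commutes] at hdet
      exact hdet)
    S' hind
  exact ⟨S, by omega, h2⟩

theorem main_aux {F : Type} [Field F] {m k : ℕ} (f : FreeAlgebra F (Fin m))
    (a : Fin m → Matrix (Fin k) (Fin k) F)
    (ha : ∀ c : F, FreeAlgebra.lift F a f ≠ c • (1 : Matrix (Fin k) (Fin k) F)) (r : ℕ) :
    Claim f (k + r) r := by
  induction r with
  | zero =>
    intro α _
    exact ⟨∅, by simp, algebraicIndependent_empty_type⟩
  | succ r ih => exact claim_step f a ha (k + r) r (by omega) ih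

end Helpers


/-- Let `F` be algebraically closed, `f` noncentral on `M_k(F)`, `n ≥ k`, and let
`Y₁,…,Y_m` be the generic `n × n` matrices over `R = F[x^{(ℓ)}_{i,j}]`. If
`α₁,…,α_n` are the roots (with multiplicity) of the characteristic polynomial of
`f(Y₁,…,Y_m)` in an algebraic closure `Ω` of `K = Frac R`, then at least `n - k`
of the `αᵢ` are algebraically independent over `F`. -/
theorem eigenvalues_algebraicallyIndependent (F : Type) [Field F] [IsAlgClosed F]
    (m k n : ℕ) (hk : 1 ≤ k) (hkn : k ≤ n) (f : FreeAlgebra F (Fin m))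
    (hnc : ∃ a : Fin m → Matrix (Fin k) (Fin k) F,
      ∀ c : F, FreeAlgebra.lift F a f ≠ c • (1 : Matrix (Fin k) (Fin k) F))
    (α : Fin n → AlgebraicClosure (FractionRing (MvPolynomial (Fin m × Fin n × Fin n) F)))
    (hα : (Matrix.charpoly
        (FreeAlgebra.lift F (fun ℓ : Fin m =>
          (Matrix.of fun i j : Fin n => MvPolynomial.X (ℓ, i, j) :
            Matrix (Fin n) (Fin n) (MvPolynomial (Fin m × Fin n × Fin n) F))) f)).map
        (algebraMap (MvPolynomial (Fin m × Fin n × Fin n) F)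
          (AlgebraicClosure (FractionRing (MvPolynomial (Fin m × Fin n × Fin n) F))))
      = ∏ i : Fin n, (Polynomial.X - Polynomial.C (α i))) :
    ∃ S : Finset (Fin n), n - k ≤ S.card ∧
      AlgebraicIndependent F (fun i : S => α i) := by
  obtain ⟨a, ha⟩ := hnc
  obtain ⟨r, rfl⟩ := Nat.exists_eq_add_of_le hkn
  obtain ⟨S, h1, h2⟩ := main_aux f a ha r α hα
  exact ⟨S, by omega, h2⟩
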